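/- arXiv:1901.01872 — 4 statements merged into one kernel-verified Lean document; each statement's English description precedes it below -/
import Mathlib

section
/- If the stepsize parameter satisfies 0 < ε < min{1/2, 2π(λ/Λ)²}, then the asynchronous network Newton iterates converge linearly in expectation in function value: for all t ≥ 0, E[F(x(t)) − F*] ≤ (1 − β)^t (F(x(0)) − F*), where β = αmε(2πλ² − εΛ²)/(λπ). -/
open Matrix BigOperators

noncomputable section

/-- Second derivative of the `i`-th local objective. -/
def d2 {n : ℕ} (f : Fin n → ℝ → ℝ) (i : Fin n) (s : ℝ) : ℝ := deriv (deriv (f i)) s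

/-- The diagonal matrix `G(x)` with `G(x)_ii = f_i''(x_i)`. -/
def Gmat {n : ℕ} (f : Fin n → ℝ → ℝ) (x : Fin n → ℝ) : Matrix (Fin n) (Fin n) ℝ :=
  Matrix.diagonal (fun i => d2 f i (x i))

/-- The Hessian `H(x) = I − W + αG(x)` of the penalized objective. -/
def Hmat {n : ℕ} (W : Matrix (Fin n) (Fin n) ℝ) (f : Fin n → ℝ → ℝ) (α : ℝ)
    (x : Fin n → ℝ) : Matrix (Fin n) (Fin n) ℝ :=
  1 - W + α • Gmat f x

/-- `B = I − 2W_d + W`. -/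
def Bmat {n : ℕ} (W : Matrix (Fin n) (Fin n) ℝ) : Matrix (Fin n) (Fin n) ℝ :=
  1 - (2 : ℝ) • Matrix.diagonal (fun i => W i i) + W

/-- Diagonal entries of the splitting matrix `D(x) = αG(x) + 2(I − W_d)`. -/
def dEntry {n : ℕ} (W : Matrix (Fin n) (Fin n) ℝ) (f : Fin n → ℝ → ℝ) (α : ℝ)
    (x : Fin n → ℝ) (i : Fin n) : ℝ :=
  α * d2 f i (x i) + 2 * (1 - W i i)

/-- `D(x) = αG(x) + 2(I − W_d)`. -/
def Dmat {n : ℕ} (W : Matrix (Fin n) (Fin n) ℝ) (f : Fin n → ℝ → ℝ) (α : ℝ)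
    (x : Fin n → ℝ) : Matrix (Fin n) (Fin n) ℝ :=
  Matrix.diagonal (dEntry W f α x)

/-- `D(x)^{1/2}`. -/
def Dhalf {n : ℕ} (W : Matrix (Fin n) (Fin n) ℝ) (f : Fin n → ℝ → ℝ) (α : ℝ)
    (x : Fin n → ℝ) : Matrix (Fin n) (Fin n) ℝ :=
  Matrix.diagonal (fun i => Real.sqrt (dEntry W f α x i))

/-- `D(x)^{-1/2}`. -/
def Dinvhalf {n : ℕ} (W : Matrix (Fin n) (Fin n) ℝ) (f : Fin n → ℝ → ℝ) (α : ℝ)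
    (x : Fin n → ℝ) : Matrix (Fin n) (Fin n) ℝ :=
  Matrix.diagonal (fun i => (Real.sqrt (dEntry W f α x i))⁻¹)

/-- The approximate Hessian inverse
`Ĥ(x)⁻¹ = D(x)^{-1/2}(I + D(x)^{-1/2} B D(x)^{-1/2}) D(x)^{-1/2}`. -/
def Hhatinv {n : ℕ} (W : Matrix (Fin n) (Fin n) ℝ) (f : Fin n → ℝ → ℝ) (α : ℝ)
    (x : Fin n → ℝ) : Matrix (Fin n) (Fin n) ℝ :=
  Dinvhalf W f α x * (1 + Dinvhalf W f α x * Bmat W * Dinvhalf W f α x) * Dinvhalf W f α x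

/-- The penalized objective `F(x) = (1/2) xᵀ(I−W)x + α Σᵢ f_i(x_i)`. -/
def Fobj {n : ℕ} (W : Matrix (Fin n) (Fin n) ℝ) (f : Fin n → ℝ → ℝ) (α : ℝ)
    (x : Fin n → ℝ) : ℝ :=
  (1 / 2) * (x ⬝ᵥ ((1 - W).mulVec x)) + α * ∑ i, f i (x i)

/-- The gradient `g(x) = (I − W)x + α (f_i'(x_i))_i` of the penalized objective. -/
def gvec {n : ℕ} (W : Matrix (Fin n) (Fin n) ℝ) (f : Fin n → ℝ → ℝ) (α : ℝ)
    (x : Fin n → ℝ) : Fin n → ℝ :=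
  fun i => ((1 - W).mulVec x) i + α * deriv (f i) (x i)

/-- The asynchronous update `x^(i)`: agent `i` moves along the approximate Newton
direction with stepsize `ε / p i`; other coordinates are unchanged. -/
def upd {n : ℕ} (W : Matrix (Fin n) (Fin n) ℝ) (f : Fin n → ℝ → ℝ) (α : ℝ)
    (p : Fin n → ℝ) (ε : ℝ) (x : Fin n → ℝ) (i : Fin n) : Fin n → ℝ :=
  Function.update x i (x i - (ε / p i) * ((Hhatinv W f α x).mulVec (gvec W f α x)) i)

/-- Euclidean norm on `ℝⁿ`. -/
def enorm {n : ℕ} (v : Fin n → ℝ) : ℝ := Real.sqrt (∑ i, v i ^ 2)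

/-!
In the Loewner order the row sums of `W` give `0 ≤ 1 - W` and `0 ≤ B` (Gershgorin), and both parts
of the splitting `D = H + B` then bound the spectra of the Hessian `H` and of
`Ĥ⁻¹ = D⁻¹ + D⁻¹ B D⁻¹` independently of the point: `αm ≤ H ≤ 1/λ` and `λ ≤ Ĥ⁻¹ ≤ Λ`.
The upper bound on `H` makes one random coordinate step along `Ĥ⁻¹ g` decrease `F` in mean by
at least `ελ ‖g‖² - ε²Λ² ‖g‖² / (2λπ)`, and the lower bound gives `‖g‖² ≥ 2αm (F - F*)`
(the Polyak-Łojasiewicz inequality). Since `x(t)` is a function of `I₁, …, I_t` and hence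
independent of the next index, the one-step contractions multiply.
-/

open Finset MeasureTheory ProbabilityTheory
open scoped MatrixOrder

lemma exists_taylor_lagrange_two {φ : ℝ → ℝ} (hφ : ContDiff ℝ 2 φ) (x v : ℝ) :
    ∃ ξ, φ (x + v) = φ x + deriv φ x * v + deriv (deriv φ) ξ * v ^ 2 / 2 := by
  rcases eq_or_ne v 0 with rfl | hv
  · exact ⟨x, by simp⟩
  have hne : x ≠ x + v := left_ne_add.2 hv
  obtain ⟨ξ, -, h⟩ := taylor_mean_remainder_lagrange_iteratedDeriv (n := 1) hne
    (hφ.contDiffOn.of_le (by norm_num))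
  have hderiv : derivWithin φ (Set.uIcc x (x + v)) x = deriv φ x :=
    (hφ.differentiable two_ne_zero x).derivWithin (uniqueDiffOn_uIcc hne x Set.left_mem_uIcc)
  have htaylor : taylorWithinEval φ 1 (Set.uIcc x (x + v)) x (x + v) = φ x + deriv φ x * v := by
    simp [taylorWithinEval_succ, hderiv, mul_comm]
  have hremainder : iteratedDeriv 2 φ ξ * (x + v - x) ^ 2 / (2).factorial =
      deriv (deriv φ) ξ * v ^ 2 / 2 := by
    simp [iteratedDeriv_succ]
  exact ⟨ξ, by linarith⟩

section LoewnerOrder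

variable {ι : Type*} [Fintype ι]

lemma nonneg_of_sum_norm_le_diag {𝕜 : Type*} [RCLike 𝕜] [DecidableEq ι] {A : Matrix ι ι 𝕜}
    (hA : A.IsHermitian)
    (hdom : ∀ i, ∑ j ∈ univ.erase i, ‖A i j‖ ≤ RCLike.re (A i i)) : 0 ≤ A := by
  rw [Matrix.nonneg_iff_posSemidef, hA.posSemidef_iff_eigenvalues_nonneg]
  intro i
  have hev : Module.End.HasEigenvalue (toLin' A) (hA.eigenvalues i : 𝕜) := by
    rw [Module.End.hasEigenvalue_iff_mem_spectrum, spectrum_toLin', hA.spectrum_eq_image_range]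
    exact Set.mem_image_of_mem _ (Set.mem_range_self i)
  obtain ⟨k, hk⟩ := eigenvalue_mem_ball hev
  have hdist : RCLike.re (A k k) - hA.eigenvalues i ≤ ‖(hA.eigenvalues i : 𝕜) - A k k‖ := by
    rw [norm_sub_rev]
    simpa using RCLike.re_le_norm (A k k - hA.eigenvalues i)
  rw [mem_closedBall_iff_norm] at hk
  simpa using (hdist.trans hk).trans (hdom k)

lemma dotProduct_mulVec_le_of_le {A B : Matrix ι ι ℝ} (h : A ≤ B) (v : ι → ℝ) :
    v ⬝ᵥ A *ᵥ v ≤ v ⬝ᵥ B *ᵥ v := by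
  have := (Matrix.le_iff.1 h).dotProduct_mulVec_nonneg v
  rwa [star_trivial, sub_mulVec, dotProduct_sub, sub_nonneg] at this

variable [DecidableEq ι] {A : Matrix ι ι ℝ} {c : ℝ}

lemma mul_dotProduct_self_le_of_smul_one_le (h : c • 1 ≤ A) (v : ι → ℝ) :
    c * (v ⬝ᵥ v) ≤ v ⬝ᵥ A *ᵥ v := by
  simpa [smul_mulVec] using dotProduct_mulVec_le_of_le h v

lemma dotProduct_mulVec_le_of_le_smul_one (h : A ≤ c • 1) (v : ι → ℝ) :
    v ⬝ᵥ A *ᵥ v ≤ c * (v ⬝ᵥ v) := by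
  simpa [smul_mulVec] using dotProduct_mulVec_le_of_le h v

lemma mulVec_dotProduct_mulVec_le_of_le_smul_one (hA : 0 ≤ A) (hc : 0 < c) (hAc : A ≤ c • 1)
    (v : ι → ℝ) : A *ᵥ v ⬝ᵥ A *ᵥ v ≤ c ^ 2 * (v ⬝ᵥ v) := by
  set w := A *ᵥ v with hw
  have hvAw : v ⬝ᵥ A *ᵥ w = w ⬝ᵥ w := by
    have hAt : Aᵀ = A := by simpa [IsHermitian] using hA.posSemidef.isHermitian
    rw [dotProduct_mulVec, ← mulVec_transpose, hAt]
  have hquad : 0 ≤ (c • v - w) ⬝ᵥ A *ᵥ (c • v - w) := by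
    simpa using dotProduct_mulVec_le_of_le hA (c • v - w)
  simp only [mulVec_sub, mulVec_smul, ← hw, sub_dotProduct, dotProduct_sub, smul_dotProduct,
    dotProduct_smul, smul_eq_mul, hvAw] at hquad
  have hww : w ⬝ᵥ w ≤ c * (v ⬝ᵥ w) := by
    refine le_of_mul_le_mul_left ?_ hc
    linarith [dotProduct_mulVec_le_of_le_smul_one hAc w]
  calc w ⬝ᵥ w ≤ c * (v ⬝ᵥ w) := hww
    _ ≤ c * (c * (v ⬝ᵥ v)) := by gcongr; exact dotProduct_mulVec_le_of_le_smul_one hAc v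
    _ = c ^ 2 * (v ⬝ᵥ v) := by ring

end LoewnerOrder

lemma diagonal_le_diagonal {ι : Type*} [DecidableEq ι] {a b : ι → ℝ} (h : a ≤ b) :
    diagonal a ≤ diagonal b := by
  rw [Matrix.le_iff, diagonal_sub]
  exact .diagonal (sub_nonneg.2 h)

lemma le_of_smul_one_le_smul_one {ι : Type*} [DecidableEq ι] [Nonempty ι] {a b : ℝ}
    (h : a • (1 : Matrix ι ι ℝ) ≤ b • 1) : a ≤ b := by
  simpa using (Matrix.le_iff.1 h).diag_nonneg (i := Classical.arbitrary ι)

section WeightMatrix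

variable {ι : Type*} [DecidableEq ι] {W : Matrix ι ι ℝ}

lemma isSymm_of_le_one (hW : W ≤ 1) : W.IsSymm := by
  simpa using isSymm_one.sub (show (1 - W).IsSymm from (Matrix.le_iff.1 hW).isHermitian)

lemma diag_le_one_of_le_one (hW : W ≤ 1) (i : ι) : W i i ≤ 1 := by
  simpa using (Matrix.le_iff.1 hW).diag_nonneg (i := i)

lemma sum_abs_erase_eq_one_sub [Fintype ι] (hnonneg : ∀ i j, 0 ≤ W i j)
    (hone : W *ᵥ (fun _ => 1) = fun _ => 1) (i : ι) : ∑ j ∈ univ.erase i, |W i j| = 1 - W i i := by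
  have hrow : ∑ j, W i j = 1 := by simpa [mulVec, dotProduct] using congrFun hone i
  simp only [abs_of_nonneg (hnonneg i _), sum_erase_eq_sub (mem_univ i), hrow]

lemma le_one_of_diagDominant [Fintype ι] (hW : W.IsSymm)
    (hdom : ∀ i, ∑ j ∈ univ.erase i, |W i j| ≤ 1 - W i i) : W ≤ 1 := by
  rw [← sub_nonneg]
  refine nonneg_of_sum_norm_le_diag (isSymm_one.sub hW) fun i => ?_
  calc ∑ j ∈ univ.erase i, ‖(1 - W) i j‖ = ∑ j ∈ univ.erase i, |W i j| :=
        sum_congr rfl fun j hj => by simp [one_apply_ne (ne_of_mem_erase hj).symm]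
    _ ≤ 1 - W i i := hdom i
    _ = (1 - W) i i := by simp

end WeightMatrix

section Network

variable {n : ℕ} {W : Matrix (Fin n) (Fin n) ℝ} {f : Fin n → ℝ → ℝ} {α : ℝ} {x : Fin n → ℝ}

lemma Bmat_eq_diagonal_sub : Bmat W = diagonal (fun i => 2 * (1 - W i i)) - (1 - W) := by
  ext i j
  rcases eq_or_ne i j with rfl | hij
  · simp only [Bmat, Matrix.add_apply, Matrix.sub_apply, one_apply_eq, Matrix.smul_apply,
      diagonal_apply_eq, smul_eq_mul]
    ring
  · simp [Bmat, hij]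

lemma Bmat_nonneg (hW : W.IsSymm)
    (hdom : ∀ i, ∑ j ∈ univ.erase i, |W i j| ≤ 1 - W i i) : 0 ≤ Bmat W := by
  have hsymm : (Bmat W).IsSymm := by
    rw [Bmat_eq_diagonal_sub]
    exact (isSymm_diagonal _).sub (isSymm_one.sub hW)
  refine nonneg_of_sum_norm_le_diag hsymm fun i => ?_
  calc ∑ j ∈ univ.erase i, ‖Bmat W i j‖ = ∑ j ∈ univ.erase i, |W i j| :=
        sum_congr rfl fun j hj => by simp [Bmat, (ne_of_mem_erase hj).symm]
    _ ≤ 1 - W i i := hdom i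
    _ = Bmat W i i := by
        simp only [Bmat, Matrix.add_apply, Matrix.sub_apply, one_apply_eq, Matrix.smul_apply,
          diagonal_apply_eq, smul_eq_mul]
        ring

lemma Bmat_le_diagonal (hW : W ≤ 1) : Bmat W ≤ diagonal fun i => 2 * (1 - W i i) := by
  rw [Bmat_eq_diagonal_sub]
  exact sub_le_self _ (sub_nonneg.2 hW)

lemma Hmat_add_Bmat : Hmat W f α x + Bmat W = Dmat W f α x := by
  rw [Bmat_eq_diagonal_sub, Hmat, Gmat, Dmat, ← diagonal_smul]
  ext i j
  rcases eq_or_ne i j with rfl | hij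
  · simp only [diagonal_smul, Matrix.add_apply, Matrix.sub_apply, one_apply_eq,
      Matrix.smul_apply, diagonal_apply_eq, smul_eq_mul, dEntry]
    ring
  · simp [hij]

lemma smul_one_le_Hmat (hW : W ≤ 1) {c : ℝ} (hc : ∀ i, c ≤ α * d2 f i (x i)) :
    c • 1 ≤ Hmat W f α x := by
  calc c • 1 ≤ diagonal fun i => α * d2 f i (x i) := by
        rw [smul_one_eq_diagonal]
        exact diagonal_le_diagonal hc
    _ = α • Gmat f x := by simp [Gmat, ← diagonal_smul]
    _ ≤ Hmat W f α x := le_add_of_nonneg_left (sub_nonneg.2 hW)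

lemma Hmat_le_smul_one (hB : 0 ≤ Bmat W) {L : ℝ}
    (hL : ∀ i, dEntry W f α x i ≤ L) : Hmat W f α x ≤ L • 1 := by
  calc Hmat W f α x ≤ Dmat W f α x := by
        rw [← Hmat_add_Bmat]
        exact le_add_of_nonneg_right hB
    _ ≤ L • 1 := by
        rw [smul_one_eq_diagonal]
        exact diagonal_le_diagonal hL

lemma Hhatinv_eq (hD : ∀ i, 0 ≤ dEntry W f α x i) :
    Hhatinv W f α x = diagonal (dEntry W f α x)⁻¹ +
      diagonal (dEntry W f α x)⁻¹ * Bmat W * diagonal (dEntry W f α x)⁻¹ := by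
  have hsq : Dinvhalf W f α x * Dinvhalf W f α x = diagonal (dEntry W f α x)⁻¹ := by
    rw [Dinvhalf, diagonal_mul_diagonal]
    congr 1
    ext i
    rw [← mul_inv, Real.mul_self_sqrt (hD i), Pi.inv_apply]
  rw [← hsq, Hhatinv]
  noncomm_ring

lemma diagonal_inv_le_Hhatinv (hB : 0 ≤ Bmat W) (hD : ∀ i, 0 ≤ dEntry W f α x i) :
    diagonal (dEntry W f α x)⁻¹ ≤ Hhatinv W f α x := by
  rw [Hhatinv_eq hD]
  exact le_add_of_nonneg_right
    ((isHermitian_diagonal _).isSelfAdjoint.conjugate_nonneg hB)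

lemma Hhatinv_le_smul_diagonal_inv (hW : W ≤ 1) (hD : ∀ i, 0 < dEntry W f α x i) {ρ : ℝ}
    (hρ : ∀ i, 2 * (1 - W i i) ≤ ρ * dEntry W f α x i) :
    Hhatinv W f α x ≤ (1 + ρ) • diagonal (dEntry W f α x)⁻¹ := by
  set E : Matrix (Fin n) (Fin n) ℝ := diagonal (dEntry W f α x)⁻¹ with hE
  have hB : Bmat W ≤ ρ • diagonal (dEntry W f α x) := by
    rw [← diagonal_smul]
    exact (Bmat_le_diagonal hW).trans (diagonal_le_diagonal hρ)
  have hED : E * diagonal (dEntry W f α x) = 1 := by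
    rw [hE, diagonal_mul_diagonal, ← diagonal_one]
    congr 1
    ext i
    exact inv_mul_cancel₀ (hD i).ne'
  calc Hhatinv W f α x = E + E * Bmat W * E := Hhatinv_eq fun i => (hD i).le
    _ ≤ E + E * (ρ • diagonal (dEntry W f α x)) * E := by
        gcongr
        exact (isHermitian_diagonal _).isSelfAdjoint.conjugate_le_conjugate hB
    _ = (1 + ρ) • E := by simp [hED, add_smul]

lemma smul_one_le_Hhatinv (hB : 0 ≤ Bmat W) (hD : ∀ i, 0 < dEntry W f α x i) {L : ℝ}
    (hL : ∀ i, dEntry W f α x i ≤ L) : (1 / L) • 1 ≤ Hhatinv W f α x := by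
  refine le_trans ?_ (diagonal_inv_le_Hhatinv hB fun i => (hD i).le)
  rw [smul_one_eq_diagonal]
  exact diagonal_le_diagonal fun i => (one_div_le_one_div_of_le (hD i) (hL i)).trans_eq (one_div _)

lemma Hhatinv_le_smul_one (hW : W ≤ 1) {l ρ : ℝ} (hl : 0 < l)
    (hD : ∀ i, l ≤ dEntry W f α x i) (hρ₀ : 0 ≤ 1 + ρ)
    (hρ : ∀ i, 2 * (1 - W i i) ≤ ρ * dEntry W f α x i) :
    Hhatinv W f α x ≤ ((1 + ρ) / l) • 1 := by
  refine (Hhatinv_le_smul_diagonal_inv hW (fun i => hl.trans_le (hD i)) hρ).trans ?_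
  rw [← diagonal_smul, smul_one_eq_diagonal]
  refine diagonal_le_diagonal fun i => ?_
  rw [div_eq_mul_inv]
  exact mul_le_mul_of_nonneg_left (inv_anti₀ hl (hD i)) hρ₀

end Network

section Objective

variable {n : ℕ} {W : Matrix (Fin n) (Fin n) ℝ} {f : Fin n → ℝ → ℝ} {α : ℝ}

lemma exists_Fobj_add_eq (hW : W.IsSymm) (hf : ∀ i, ContDiff ℝ 2 (f i)) (x v : Fin n → ℝ) :
    ∃ ξ, Fobj W f α (x + v) =
      Fobj W f α x + gvec W f α x ⬝ᵥ v + v ⬝ᵥ Hmat W f α ξ *ᵥ v / 2 := by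
  choose ξ hξ using fun i => exists_taylor_lagrange_two (hf i) (x i) (v i)
  refine ⟨ξ, ?_⟩
  have hcross : x ⬝ᵥ (1 - W) *ᵥ v = (1 - W) *ᵥ x ⬝ᵥ v := by
    rw [dotProduct_mulVec, ← mulVec_transpose, (isSymm_one.sub hW).eq]
  have hquad : (x + v) ⬝ᵥ (1 - W) *ᵥ (x + v) =
      x ⬝ᵥ (1 - W) *ᵥ x + 2 * ((1 - W) *ᵥ x ⬝ᵥ v) + v ⬝ᵥ (1 - W) *ᵥ v := by
    rw [mulVec_add, add_dotProduct, dotProduct_add, dotProduct_add, hcross,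
      dotProduct_comm v ((1 - W) *ᵥ x)]
    ring
  have hlocal : ∑ i, f i (x i + v i) = ∑ i, f i (x i) + ∑ i, deriv (f i) (x i) * v i +
      (∑ i, d2 f i (ξ i) * v i ^ 2) / 2 := by
    simp only [hξ, sum_add_distrib, sum_div, d2]
  have hgrad : gvec W f α x ⬝ᵥ v =
      (1 - W) *ᵥ x ⬝ᵥ v + α * ∑ i, deriv (f i) (x i) * v i := by
    simp only [gvec, dotProduct, add_mul, sum_add_distrib, mul_sum, mul_assoc]
  have hhess : v ⬝ᵥ Hmat W f α ξ *ᵥ v =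
      v ⬝ᵥ (1 - W) *ᵥ v + α * ∑ i, d2 f i (ξ i) * v i ^ 2 := by
    rw [Hmat, add_mulVec, dotProduct_add, smul_mulVec, dotProduct_smul, smul_eq_mul]
    congr 2
    exact sum_congr rfl fun i _ => by rw [Gmat, mulVec_diagonal]; ring
  simp only [Fobj, Pi.add_apply, hquad, hlocal, hgrad, hhess]
  ring

end Objective

section RandomizedCoordinateDescent

variable {ι : Type*} [Fintype ι]

lemma two_mul_sub_le_dotProduct_self {μ a b : ℝ} (hμ : 0 < μ) {g v : ι → ℝ}
    (h : a + g ⬝ᵥ v + μ * (v ⬝ᵥ v) / 2 ≤ b) : 2 * μ * (a - b) ≤ g ⬝ᵥ g := by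
  have hsq : 0 ≤ (g + μ • v) ⬝ᵥ (g + μ • v) :=
    sum_nonneg fun i _ => mul_self_nonneg _
  simp only [add_dotProduct, dotProduct_add, smul_dotProduct, dotProduct_smul, smul_eq_mul,
    dotProduct_comm v g] at hsq
  have := mul_le_mul_of_nonneg_left h hμ.le
  linarith

variable [DecidableEq ι] {F : (ι → ℝ) → ℝ} {x g d : ι → ℝ} {p : ι → ℝ} {L π ε : ℝ}

lemma sum_mul_update_le (hL : 0 ≤ L)
    (hF : ∀ v, F (x + v) ≤ F x + g ⬝ᵥ v + L * (v ⬝ᵥ v) / 2)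
    (hπ : 0 < π) (hp : ∀ i, π ≤ p i) (hsum : ∑ i, p i = 1) :
    ∑ i, p i * F (Function.update x i (x i - ε / p i * d i)) ≤
      F x - ε * (g ⬝ᵥ d) + L * ε ^ 2 / (2 * π) * (d ⬝ᵥ d) := by
  have hterm (i : ι) : p i * F (Function.update x i (x i - ε / p i * d i)) ≤
      p i * F x - ε * (g i * d i) + L * ε ^ 2 / (2 * π) * (d i * d i) := by
    have hpi : 0 < p i := hπ.trans_le (hp i)
    have hmove : Function.update x i (x i - ε / p i * d i) =
        x + Pi.single i (-(ε / p i * d i)) := by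
      ext j
      rcases eq_or_ne j i with rfl | hj
      · simp [sub_eq_add_neg]
      · simp [hj]
    calc p i * F (Function.update x i (x i - ε / p i * d i))
        ≤ p i * (F x - g i * (ε / p i * d i) + L * (ε / p i * d i) ^ 2 / 2) := by
          gcongr
          rw [hmove]
          refine (hF _).trans_eq ?_
          simp only [dotProduct_single, Pi.single_eq_same]
          ring
      _ = p i * F x - ε * (g i * d i) + L * ε ^ 2 / (2 * p i) * (d i * d i) := by
          field_simp
      _ ≤ p i * F x - ε * (g i * d i) + L * ε ^ 2 / (2 * π) * (d i * d i) := by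
          gcongr
          · exact mul_self_nonneg _
          · exact hp i
  refine (sum_le_sum fun i _ => hterm i).trans_eq ?_
  simp only [sum_add_distrib, sum_sub_distrib, ← sum_mul, ← mul_sum, hsum, dotProduct, one_mul]

lemma sum_mul_update_sub_le {lam Lam μ b : ℝ} (hL : 0 ≤ L)
    (hF : ∀ v, F (x + v) ≤ F x + g ⬝ᵥ v + L * (v ⬝ᵥ v) / 2)
    (hPL : 2 * μ * (F x - b) ≤ g ⬝ᵥ g)
    (hlam : lam * (g ⬝ᵥ g) ≤ g ⬝ᵥ d) (hLam : d ⬝ᵥ d ≤ Lam ^ 2 * (g ⬝ᵥ g))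
    (hπ : 0 < π) (hp : ∀ i, π ≤ p i) (hsum : ∑ i, p i = 1)
    (hε : 0 ≤ ε) (hεL : L * ε * Lam ^ 2 ≤ 2 * π * lam) :
    ∑ i, p i * (F (Function.update x i (x i - ε / p i * d i)) - b) ≤
      (1 - μ * ε * (2 * π * lam - L * ε * Lam ^ 2) / π) * (F x - b) := by
  have hgain : 0 ≤ ε * (2 * π * lam - L * ε * Lam ^ 2) / (2 * π) := by
    have := sub_nonneg.2 hεL
    positivity
  calc ∑ i, p i * (F (Function.update x i (x i - ε / p i * d i)) - b)
      = ∑ i, p i * F (Function.update x i (x i - ε / p i * d i)) - b := by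
        simp only [mul_sub, sum_sub_distrib, ← sum_mul, hsum, one_mul]
    _ ≤ F x - ε * (g ⬝ᵥ d) + L * ε ^ 2 / (2 * π) * (d ⬝ᵥ d) - b := by
        gcongr
        exact sum_mul_update_le hL hF hπ hp hsum
    _ ≤ F x - ε * (lam * (g ⬝ᵥ g)) + L * ε ^ 2 / (2 * π) * (Lam ^ 2 * (g ⬝ᵥ g)) - b := by
        gcongr
    _ = F x - b - ε * (2 * π * lam - L * ε * Lam ^ 2) / (2 * π) * (g ⬝ᵥ g) := by
        field_simp
        ring
    _ ≤ F x - b - ε * (2 * π * lam - L * ε * Lam ^ 2) / (2 * π) * (2 * μ * (F x - b)) :=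
        sub_le_sub_left (mul_le_mul_of_nonneg_left hPL hgain) _
    _ = (1 - μ * ε * (2 * π * lam - L * ε * Lam ^ 2) / π) * (F x - b) := by
        field_simp

end RandomizedCoordinateDescent

section RandomRecursion

variable {Ω ι S : Type*} {I : ℕ → Ω → ι} {T : S → ι → S} {x₀ : S} {X : ℕ → Ω → S}

lemma exists_eq_comp_history (hX0 : ∀ ω, X 0 ω = x₀)
    (hXsucc : ∀ t ω, X (t + 1) ω = T (X t ω) (I (t + 1) ω)) (t : ℕ) :
    ∃ φ : (Iic t → ι) → S, ∀ ω, X t ω = φ (fun s => I s ω) := by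
  induction t with
  | zero => exact ⟨fun _ => x₀, hX0⟩
  | succ t ih =>
    obtain ⟨φ, hφ⟩ := ih
    exact ⟨fun h => T (φ (restrict₂ (π := fun _ => ι) (Iic_subset_Iic.2 t.le_succ) h))
      (h ⟨t + 1, mem_Iic.2 le_rfl⟩),
      fun ω => by rw [hXsucc, hφ]; rfl⟩

variable [MeasurableSpace Ω] {μ : Measure Ω} [MeasurableSpace ι]

lemma indepFun_history_succ (hmeas : ∀ t, Measurable (I t)) (hindep : iIndepFun I μ) (t : ℕ) :
    IndepFun (fun ω (s : Iic t) => I s ω) (I (t + 1)) μ := by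
  have hdisj : Disjoint (Iic t) {t + 1} := by simp
  exact (hindep.indepFun_finset _ _ hdisj hmeas).comp measurable_id
    (measurable_pi_apply ⟨t + 1, mem_singleton_self _⟩)

variable [Fintype ι] [MeasurableSingletonClass ι]

lemma integral_comp_eq_integral_sum {Y : Ω → S} {J : Ω → ι} [MeasurableSpace S]
    [IsFiniteMeasure μ] (hY : Measurable Y) (hJ : Measurable J) (hYJ : IndepFun Y J μ)
    {h : S → ι → ℝ} (hint : Integrable (Function.uncurry h) ((μ.map Y).prod (μ.map J))) :
    ∫ ω, h (Y ω) (J ω) ∂μ = ∫ ω, ∑ i, μ.real (J ⁻¹' {i}) * h (Y ω) i ∂μ := by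
  have hlaw := hYJ.map_prod_eq_prod_map_map hY.aemeasurable hJ.aemeasurable
  have hsection (y : S) : ∫ i, h y i ∂μ.map J = ∑ i, μ.real (J ⁻¹' {i}) * h y i := by
    rw [integral_fintype .of_finite]
    simp only [map_measureReal_apply hJ (measurableSet_singleton _), smul_eq_mul]
  calc ∫ ω, h (Y ω) (J ω) ∂μ
      = ∫ q, Function.uncurry h q ∂(μ.map Y).prod (μ.map J) := by
        rw [← hlaw] at hint ⊢
        exact (integral_map (hY.prodMk hJ).aemeasurable hint.aestronglyMeasurable).symm
    _ = ∫ y, ∫ i, h y i ∂μ.map J ∂μ.map Y := integral_prod _ hint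
    _ = ∫ ω, ∫ i, h (Y ω) i ∂μ.map J ∂μ :=
        integral_map hY.aemeasurable hint.integral_prod_left.aestronglyMeasurable
    _ = ∫ ω, ∑ i, μ.real (J ⁻¹' {i}) * h (Y ω) i ∂μ := by simp only [hsection]

lemma integral_le_pow_mul_of_sum_mul_le [IsProbabilityMeasure μ]
    (hmeas : ∀ t, Measurable (I t)) (hindep : iIndepFun I μ)
    {p : ι → ℝ} (hlaw : ∀ t i, μ.real (I t ⁻¹' {i}) = p i)
    (hX0 : ∀ ω, X 0 ω = x₀) (hXsucc : ∀ t ω, X (t + 1) ω = T (X t ω) (I (t + 1) ω))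
    {V : S → ℝ} {c : ℝ} (hc : 0 ≤ c) (hV : ∀ x, ∑ i, p i * V (T x i) ≤ c * V x) (t : ℕ) :
    ∫ ω, V (X t ω) ∂μ ≤ c ^ t * V x₀ := by
  induction t with
  | zero => simp [hX0]
  | succ t ih =>
    obtain ⟨φ, hφ⟩ := exists_eq_comp_history hX0 hXsucc t
    have hhist : Measurable fun ω (s : Iic t) => I s ω := measurable_pi_lambda _ fun s => hmeas s
    have hint (u : (Iic t → ι) → ℝ) : Integrable (fun ω => u fun s => I s ω) μ :=
      (Integrable.of_finite (f := u)).comp_measurable hhist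
    calc ∫ ω, V (X (t + 1) ω) ∂μ
        = ∫ ω, ∑ i, p i * V (T (X t ω) i) ∂μ := by
          simp_rw [hXsucc, hφ, ← hlaw (t + 1)]
          exact integral_comp_eq_integral_sum (h := fun y i => V (T (φ y) i)) hhist (hmeas _)
            (indepFun_history_succ hmeas hindep t) .of_finite
      _ ≤ ∫ ω, c * V (X t ω) ∂μ := by
          simp_rw [hφ]
          exact integral_mono (hint fun y => ∑ i, p i * V (T (φ y) i))
            (hint fun y => c * V (φ y)) fun ω => hV _
      _ = c * ∫ ω, V (X t ω) ∂μ := integral_const_mul _ _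
      _ ≤ c * (c ^ t * V x₀) := by gcongr
      _ = c ^ (t + 1) * V x₀ := by ring

end RandomRecursion

section Convergence

variable {n : ℕ} {W : Matrix (Fin n) (Fin n) ℝ} {f : Fin n → ℝ → ℝ} {α : ℝ}

lemma sum_mul_Fobj_upd_sub_le {c lam Lam ε π : ℝ} {p x : Fin n → ℝ} (hW : W.IsSymm)
    (hf : ∀ i, ContDiff ℝ 2 (f i)) (hc : 0 < c) (hlam : 0 < lam) (hLam : 0 < Lam)
    (hcH : ∀ ξ, c • 1 ≤ Hmat W f α ξ) (hHlam : ∀ ξ, Hmat W f α ξ ≤ (1 / lam) • 1)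
    (hlamH : lam • 1 ≤ Hhatinv W f α x) (hHLam : Hhatinv W f α x ≤ Lam • 1)
    (hπ : 0 < π) (hp : ∀ i, π ≤ p i) (hsum : ∑ i, p i = 1)
    (hε : 0 ≤ ε) (hεle : ε ≤ 2 * π * (lam / Lam) ^ 2) (y : Fin n → ℝ) :
    ∑ i, p i * (Fobj W f α (upd W f α p ε x i) - Fobj W f α y) ≤
      (1 - c * ε * (2 * π * lam ^ 2 - ε * Lam ^ 2) / (lam * π)) *
        (Fobj W f α x - Fobj W f α y) := by
  have hupper (v : Fin n → ℝ) : Fobj W f α (x + v) ≤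
      Fobj W f α x + gvec W f α x ⬝ᵥ v + 1 / lam * (v ⬝ᵥ v) / 2 := by
    obtain ⟨ξ, hξ⟩ := exists_Fobj_add_eq (α := α) hW hf x v
    linarith [dotProduct_mulVec_le_of_le_smul_one (hHlam ξ) v]
  have hPL : 2 * c * (Fobj W f α x - Fobj W f α y) ≤ gvec W f α x ⬝ᵥ gvec W f α x := by
    refine two_mul_sub_le_dotProduct_self (v := y - x) hc ?_
    obtain ⟨ξ, hξ⟩ := exists_Fobj_add_eq (α := α) hW hf x (y - x)
    rw [add_sub_cancel] at hξ
    linarith [mul_dotProduct_self_le_of_smul_one_le (hcH ξ) (y - x)]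
  have hHhat : 0 ≤ Hhatinv W f α x := (smul_nonneg hlam.le zero_le_one).trans hlamH
  have hstep : 1 / lam * ε * Lam ^ 2 ≤ 2 * π * lam := by
    rw [div_pow, mul_div_assoc', le_div_iff₀ (by positivity)] at hεle
    field_simp
    linarith
  have hrate : c * ε * (2 * π * lam ^ 2 - ε * Lam ^ 2) / (lam * π) =
      c * ε * (2 * π * lam - 1 / lam * ε * Lam ^ 2) / π := by
    field_simp
  rw [hrate]
  exact sum_mul_update_sub_le (one_div_pos.2 hlam).le hupper hPL
    (mul_dotProduct_self_le_of_smul_one_le hlamH _)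
    (mulVec_dotProduct_mulVec_le_of_le_smul_one hHhat hLam hHLam _) hπ hp hsum hε hstep

lemma contraction_rate_le_one {c lam Lam ε π : ℝ} (hc : 0 ≤ c) (hlam : 0 < lam)
    (hclam : c * lam ≤ 1) (hle : lam ≤ Lam) (hπ : 0 < π) (hπ₁ : π ≤ 1) (hε : 0 ≤ ε) :
    c * ε * (2 * π * lam ^ 2 - ε * Lam ^ 2) / (lam * π) ≤ 1 := by
  rw [div_le_one (by positivity)]
  calc c * ε * (2 * π * lam ^ 2 - ε * Lam ^ 2)
      ≤ c * ε * (2 * π * lam ^ 2 - ε * lam ^ 2) := by gcongr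
    _ = c * lam * (lam * (ε * (2 * π - ε))) := by ring
    _ ≤ c * lam * (lam * π ^ 2) := by
        gcongr
        linarith [sq_nonneg (π - ε)]
    _ ≤ 1 * (lam * (π * 1)) := by
        rw [sq]
        gcongr
    _ = lam * π := by ring

theorem integral_Fobj_sub_le_pow_mul {c lam Lam ε π : ℝ} {p : Fin n → ℝ} (hW : W.IsSymm)
    (hf : ∀ i, ContDiff ℝ 2 (f i)) (hc : 0 < c) (hlam : 0 < lam)
    (hcH : ∀ x, c • 1 ≤ Hmat W f α x) (hHlam : ∀ x, Hmat W f α x ≤ (1 / lam) • 1)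
    (hlamH : ∀ x, lam • 1 ≤ Hhatinv W f α x) (hHLam : ∀ x, Hhatinv W f α x ≤ Lam • 1)
    (hπ : 0 < π) (hp : ∀ i, π ≤ p i) (hsum : ∑ i, p i = 1)
    (hε : 0 ≤ ε) (hεle : ε ≤ 2 * π * (lam / Lam) ^ 2)
    {Ω : Type*} [MeasurableSpace Ω] {μ : Measure Ω} [IsProbabilityMeasure μ]
    {I : ℕ → Ω → Fin n} (hmeas : ∀ t, Measurable (I t)) (hindep : iIndepFun I μ)
    (hlaw : ∀ t i, μ.real (I t ⁻¹' {i}) = p i)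
    {x₀ : Fin n → ℝ} {X : ℕ → Ω → Fin n → ℝ} (hX0 : ∀ ω, X 0 ω = x₀)
    (hXsucc : ∀ t ω, X (t + 1) ω = upd W f α p ε (X t ω) (I (t + 1) ω))
    (y : Fin n → ℝ) (t : ℕ) :
    ∫ ω, (Fobj W f α (X t ω) - Fobj W f α y) ∂μ ≤
      (1 - c * ε * (2 * π * lam ^ 2 - ε * Lam ^ 2) / (lam * π)) ^ t *
        (Fobj W f α x₀ - Fobj W f α y) := by
  obtain ⟨i, -, -⟩ := exists_ne_zero_of_sum_ne_zero (hsum ▸ one_ne_zero)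
  have : Nonempty (Fin n) := ⟨i⟩
  have hle : lam ≤ Lam := le_of_smul_one_le_smul_one ((hlamH 0).trans (hHLam 0))
  have hclam : c * lam ≤ 1 :=
    (le_div_iff₀ hlam).1 (le_of_smul_one_le_smul_one ((hcH 0).trans (hHlam 0)))
  have hπ₁ : π ≤ 1 := (hp i).trans <| hsum ▸
    single_le_sum (fun j _ => hπ.le.trans (hp j)) (mem_univ i)
  exact integral_le_pow_mul_of_sum_mul_le (V := fun x => Fobj W f α x - Fobj W f α y)
    hmeas hindep hlaw hX0 hXsucc
    (sub_nonneg.2 (contraction_rate_le_one hc.le hlam hclam hle hπ hπ₁ hε))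
    (fun x => sum_mul_Fobj_upd_sub_le hW hf hc hlam (hlam.trans_le hle) hcH hHlam (hlamH x)
      (hHLam x) hπ hp hsum hε hεle y) t

end Convergence

section Constants

variable {n : ℕ} {W : Matrix (Fin n) (Fin n) ℝ} {f : Fin n → ℝ → ℝ} {α c C δ Δ : ℝ}
  {x : Fin n → ℝ} {i : Fin n}

lemma le_dEntry (hΔ : W i i ≤ Δ) (hc : c ≤ α * d2 f i (x i)) :
    2 * (1 - Δ) + c ≤ dEntry W f α x i := by
  unfold dEntry
  linarith

lemma dEntry_le (hδ : δ ≤ W i i) (hC : α * d2 f i (x i) ≤ C) :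
    dEntry W f α x i ≤ 2 * (1 - δ) + C := by
  unfold dEntry
  linarith

lemma two_mul_one_sub_le_mul_dEntry (hW : W i i ≤ 1) (hδ : δ ≤ W i i) (hc₀ : 0 < c)
    (hc : c ≤ α * d2 f i (x i)) :
    2 * (1 - W i i) ≤ 2 * (1 - δ) / (2 * (1 - δ) + c) * dEntry W f α x i := by
  rw [div_mul_eq_mul_div, le_div_iff₀ (by linarith)]
  have hcδ : (1 - W i i) * c ≤ (1 - δ) * (α * d2 f i (x i)) :=
    mul_le_mul (by linarith) hc hc₀.le (by linarith)
  unfold dEntry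
  linarith

end Constants

theorem stmt9_general {n : ℕ} {W : Matrix (Fin n) (Fin n) ℝ} (hW : W ≤ 1) (hB : 0 ≤ Bmat W)
    {δ Δ : ℝ} (hΔ : Δ ≤ 1) (hWdiag : ∀ i, δ ≤ W i i ∧ W i i ≤ Δ)
    {f : Fin n → ℝ → ℝ} (hf : ∀ i, ContDiff ℝ 2 (f i))
    {m M : ℝ} (hm : 0 < m) (hd2 : ∀ i s, m ≤ d2 f i s ∧ d2 f i s ≤ M) {α : ℝ} (hα : 0 < α)
    {p : Fin n → ℝ} {pmin : ℝ} (hpmin : 0 < pmin) (hp : ∀ i, pmin ≤ p i) (hpsum : ∑ i, p i = 1)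
    {ρ lam Lam : ℝ} (hρ : ρ = 2 * (1 - δ) / (2 * (1 - δ) + α * m))
    (hlam : lam = 1 / (2 * (1 - δ) + α * M)) (hLam : Lam = (1 + ρ) / (2 * (1 - Δ) + α * m))
    {ε : ℝ} (hε : 0 ≤ ε) (hεle : ε ≤ 2 * pmin * (lam / Lam) ^ 2)
    {β : ℝ} (hβ : β = α * m * ε * (2 * pmin * lam ^ 2 - ε * Lam ^ 2) / (lam * pmin))
    {Ω : Type*} [MeasurableSpace Ω] {μ : Measure Ω} [IsProbabilityMeasure μ]
    {I : ℕ → Ω → Fin n} (hImeas : ∀ t, Measurable (I t)) (hIindep : iIndepFun I μ)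
    (hIdist : ∀ t i, μ {ω | I t ω = i} = ENNReal.ofReal (p i))
    {x₀ : Fin n → ℝ} {X : ℕ → Ω → Fin n → ℝ} (hX0 : ∀ ω, X 0 ω = x₀)
    (hXsucc : ∀ t ω, X (t + 1) ω = upd W f α p ε (X t ω) (I (t + 1) ω))
    (y : Fin n → ℝ) (t : ℕ) :
    ∫ ω, (Fobj W f α (X t ω) - Fobj W f α y) ∂μ ≤
      (1 - β) ^ t * (Fobj W f α x₀ - Fobj W f α y) := by
  have hc₀ : 0 < α * m := mul_pos hα hm
  have hc (i : Fin n) (s : ℝ) : α * m ≤ α * d2 f i s := mul_le_mul_of_nonneg_left (hd2 i s).1 hα.le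
  have hC (i : Fin n) (s : ℝ) : α * d2 f i s ≤ α * M := mul_le_mul_of_nonneg_left (hd2 i s).2 hα.le
  obtain ⟨i, -, -⟩ := exists_ne_zero_of_sum_ne_zero (hpsum ▸ one_ne_zero)
  have hδ : 0 ≤ 1 - δ := by linarith [hWdiag i]
  have hcC : α * m ≤ α * M := (hc i 0).trans (hC i 0)
  have hl₀ : 0 < 2 * (1 - Δ) + α * m := by linarith
  have hl (x : Fin n → ℝ) (i : Fin n) : 2 * (1 - Δ) + α * m ≤ dEntry W f α x i :=
    le_dEntry (hWdiag i).2 (hc i _)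
  have hL (x : Fin n → ℝ) (i : Fin n) : dEntry W f α x i ≤ 2 * (1 - δ) + α * M :=
    dEntry_le (hWdiag i).1 (hC i _)
  have hρ₀ : 0 ≤ ρ := by rw [hρ]; positivity
  have hlam₀ : 0 < lam := by rw [hlam]; exact one_div_pos.2 (by linarith)
  have hHlam (x : Fin n → ℝ) : Hmat W f α x ≤ (1 / lam) • 1 := by
    rw [hlam, one_div_one_div]
    exact Hmat_le_smul_one hB (hL x)
  have hlamH (x : Fin n → ℝ) : lam • 1 ≤ Hhatinv W f α x := by
    rw [hlam]
    exact smul_one_le_Hhatinv hB (fun i => hl₀.trans_le (hl x i)) (hL x)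
  have hHLam (x : Fin n → ℝ) : Hhatinv W f α x ≤ Lam • 1 := by
    rw [hLam]
    refine Hhatinv_le_smul_one hW hl₀ (hl x) (by linarith) fun i => ?_
    rw [hρ]
    exact two_mul_one_sub_le_mul_dEntry (diag_le_one_of_le_one hW i) (hWdiag i).1 hc₀ (hc i _)
  have hlaw (t : ℕ) (i : Fin n) : μ.real (I t ⁻¹' {i}) = p i :=
    (congrArg ENNReal.toReal (hIdist t i)).trans (ENNReal.toReal_ofReal (hpmin.le.trans (hp i)))
  rw [hβ]
  exact integral_Fobj_sub_le_pow_mul (isSymm_of_le_one hW) hf hc₀ hlam₀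
    (fun x => smul_one_le_Hmat hW fun i => hc i _) hHlam hlamH hHLam hpmin hp hpsum hε hεle
    hImeas hIindep hlaw hX0 hXsucc y t

/-- Global linear convergence in expectation of the function values:
`E[F(x(t)) − F*] ≤ (1 − β)^t (F(x(0)) − F*)`. -/
theorem stmt9 (n : ℕ) (hn : 1 ≤ n)
    (W : Matrix (Fin n) (Fin n) ℝ) (hWsymm : W.IsSymm)
    (hWnonneg : ∀ i j, 0 ≤ W i j) (hWlt : ∀ i j, W i j < 1)
    (hWone : W.mulVec (fun _ => 1) = fun _ => 1)
    (hWnull : ∀ x : Fin n → ℝ, ((1 - W).mulVec x = 0 ↔ ∃ c : ℝ, x = fun _ => c))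
    (δ Δ : ℝ) (hδ : 0 < δ) (hδΔ : δ ≤ Δ) (hΔ : Δ < 1)
    (hWdiag : ∀ i, δ ≤ W i i ∧ W i i ≤ Δ)
    (f : Fin n → ℝ → ℝ) (hf : ∀ i, ContDiff ℝ 2 (f i))
    (hconv : ∀ i, ConvexOn ℝ Set.univ (f i))
    (m M : ℝ) (hm : 0 < m) (hmM : m ≤ M)
    (hd2 : ∀ i s, m ≤ d2 f i s ∧ d2 f i s ≤ M)
    (α : ℝ) (hα : 0 < α)
    (p : Fin n → ℝ) (pmin pmax : ℝ) (hpmin : 0 < pmin) (hpmax : pmax < 1)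
    (hp : ∀ i, pmin ≤ p i ∧ p i ≤ pmax) (hpsum : ∑ i, p i = 1)
    (xstar : Fin n → ℝ) (hmin : ∀ y, Fobj W f α xstar ≤ Fobj W f α y)
    (ρ lam Lam : ℝ) (hρ : ρ = 2 * (1 - δ) / (2 * (1 - δ) + α * m))
    (hlam : lam = 1 / (2 * (1 - δ) + α * M))
    (hLam : Lam = (1 + ρ) / (2 * (1 - Δ) + α * m))
    (ε : ℝ) (hε : 0 < ε) (hεlt : ε < min (1 / 2) (2 * pmin * (lam / Lam) ^ 2))
    (β : ℝ) (hβ : β = α * m * ε * (2 * pmin * lam ^ 2 - ε * Lam ^ 2) / (lam * pmin))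
    (Ω : Type*) [MeasurableSpace Ω] (μ : MeasureTheory.Measure Ω)
    [MeasureTheory.IsProbabilityMeasure μ]
    (I : ℕ → Ω → Fin n) (hImeas : ∀ t, Measurable (I t))
    (hIindep : ProbabilityTheory.iIndepFun I μ)
    (hIdist : ∀ t i, μ {ω | I t ω = i} = ENNReal.ofReal (p i))
    (x0 : Fin n → ℝ) (X : ℕ → Ω → Fin n → ℝ)
    (hX0 : ∀ ω, X 0 ω = x0)
    (hXsucc : ∀ (t : ℕ) (ω : Ω), X (t + 1) ω = upd W f α p ε (X t ω) (I (t + 1) ω))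
    : ∀ t : ℕ,
      ∫ ω, (Fobj W f α (X t ω) - Fobj W f α xstar) ∂μ ≤
        (1 - β) ^ t * (Fobj W f α x0 - Fobj W f α xstar) := by
  have hdom (i : Fin n) : ∑ j ∈ univ.erase i, |W i j| ≤ 1 - W i i :=
    (sum_abs_erase_eq_one_sub hWnonneg hWone i).le
  exact stmt9_general (le_one_of_diagDominant hWsymm hdom) (Bmat_nonneg hWsymm hdom) hΔ.le hWdiag
    hf hm hd2 hα hpmin (fun i => (hp i).1) hpsum hρ hlam hLam hε.le
    (hεlt.le.trans (min_le_right _ _)) hβ hImeas hIindep hIdist hX0 hXsucc xstar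
end
end

section
/- Let Q be a symmetric n×n real matrix, P a diagonal n×n matrix with positive diagonal entries p_1,…,p_n summing to 1, and for each i let Φ^i be the diagonal matrix with 1 in the (i,i) entry and 0 elsewhere. Then for any ε ∈ ℝ and any y ∈ ℝⁿ: Σᵢ pᵢ ‖(I − εP⁻¹Φ^i + εP⁻¹Φ^i Q) y‖² = ‖y‖² + yᵀ(−2ε(I − Q) + ε²(I − Q)P⁻¹(I − Q)) y, where ‖·‖ is the Euclidean norm. -/
open Matrix BigOperators

noncomputable section

/-- The diagonal matrix `P⁻¹` with entries `(p i)⁻¹`. -/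
def Pinv {n : ℕ} (p : Fin n → ℝ) : Matrix (Fin n) (Fin n) ℝ :=
  Matrix.diagonal (fun i => (p i)⁻¹)

/-- The activation matrix `Φ^i`: diagonal with a single `1` in position `(i,i)`. -/
def Phi {n : ℕ} (i : Fin n) : Matrix (Fin n) (Fin n) ℝ :=
  Matrix.diagonal (fun j => if j = i then (1 : ℝ) else 0)

/-! Put `z = (I - Q)y`. The `i`-th map only changes coordinate `i` of `y`, subtracting
`ε zᵢ / pᵢ`, so it changes `‖y‖²` by `-2ε yᵢzᵢ / pᵢ + ε² zᵢ² / pᵢ²`. Averaging with the weights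
`pᵢ` cancels one factor `pᵢ`, which leaves the quadratic forms `-2ε yᵀz` and `ε² zᵀP⁻¹z`. -/

section General

variable {ι R K : Type*} [Fintype ι] [DecidableEq ι] [Field K]

theorem sum_sub_single_sq [CommRing R] (y : ι → R) (i : ι) (c : R) :
    ∑ j, (y - Pi.single i c : ι → R) j ^ 2 = ∑ j, y j ^ 2 - 2 * c * y i + c ^ 2 := by
  have expand : (y - Pi.single i c) ⬝ᵥ (y - Pi.single i c) = y ⬝ᵥ y - 2 * c * y i + c ^ 2 := by
    simp only [sub_dotProduct, dotProduct_sub, dotProduct_single, single_dotProduct,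
      Pi.sub_apply, Pi.single_eq_same]
    ring
  simpa only [dotProduct, ← pow_two] using expand

theorem diagonal_mul_diagonal_single_mulVec [Semiring R] (d : ι → R) (i : ι) (z : ι → R) :
    (diagonal d * diagonal (Pi.single i 1)) *ᵥ z = Pi.single i (d i * z i) := by
  rw [← mulVec_mulVec, diagonal_single, single_mulVec_eq, one_mul, ← Pi.single_smul, smul_eq_mul,
    mul_one, diagonal_mulVec_single]

theorem one_sub_smul_add_smul_mul_mulVec [Ring R] (M Q : Matrix ι ι R) (ε : R) (y : ι → R) :
    (1 - ε • M + ε • (M * Q)) *ᵥ y = y - ε • M *ᵥ ((1 - Q) *ᵥ y) := by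
  have factor : 1 - ε • M + ε • (M * Q) = 1 - ε • (M * (1 - Q)) := by
    rw [mul_sub, mul_one, smul_sub, sub_add]
  rw [factor, sub_mulVec, one_mulVec, smul_mulVec, mulVec_mulVec]

theorem dotProduct_transpose_mul_diagonal_mul_mulVec {κ : Type*} [Fintype κ] [CommSemiring R]
    (A : Matrix ι κ R) (d : ι → R) (y : κ → R) :
    y ⬝ᵥ ((Aᵀ * diagonal d * A) *ᵥ y) = ∑ i, d i * (A *ᵥ y) i ^ 2 := by
  rw [← mulVec_mulVec, ← mulVec_mulVec, dotProduct_mulVec, vecMul_transpose]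
  refine Finset.sum_congr rfl fun i _ => ?_
  rw [mulVec_diagonal]
  ring

theorem sum_mul_sum_sub_single_sq {p : ι → K} (hp : ∀ i, p i ≠ 0) (ε : K) (y z : ι → K) :
    ∑ i, p i * ∑ j, (y - Pi.single i (ε * ((p i)⁻¹ * z i)) : ι → K) j ^ 2 =
      (∑ i, p i) * ∑ j, y j ^ 2 - 2 * ε * (y ⬝ᵥ z) + ε ^ 2 * ∑ i, (p i)⁻¹ * z i ^ 2 := by
  have weighted (i : ι) : p i * ∑ j, (y - Pi.single i (ε * ((p i)⁻¹ * z i)) : ι → K) j ^ 2 =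
      p i * ∑ j, y j ^ 2 - 2 * ε * (y i * z i) + ε ^ 2 * ((p i)⁻¹ * z i ^ 2) := by
    have hpi := hp i
    rw [sum_sub_single_sq]
    field_simp
  simp_rw [weighted, Finset.sum_add_distrib, Finset.sum_sub_distrib, ← Finset.sum_mul,
    ← Finset.mul_sum, dotProduct]

theorem stmt13_general (Q : Matrix ι ι K) {p : ι → K} (hp : ∀ i, p i ≠ 0) (ε : K) (y : ι → K) :
    ∑ i, p i * ∑ j, ((1 - ε • (diagonal p⁻¹ * diagonal (Pi.single i 1)) +
        ε • (diagonal p⁻¹ * diagonal (Pi.single i 1) * Q)) *ᵥ y) j ^ 2 =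
      (∑ i, p i) * ∑ j, y j ^ 2 +
        y ⬝ᵥ ((-(2 * ε) • (1 - Q) + ε ^ 2 • ((1 - Q)ᵀ * diagonal p⁻¹ * (1 - Q))) *ᵥ y) := by
  simp_rw [one_sub_smul_add_smul_mul_mulVec, diagonal_mul_diagonal_single_mulVec,
    ← Pi.single_smul, smul_eq_mul, Pi.inv_apply]
  rw [sum_mul_sum_sub_single_sq hp, add_mulVec, smul_mulVec, smul_mulVec, dotProduct_add,
    dotProduct_smul, dotProduct_smul, dotProduct_transpose_mul_diagonal_mul_mulVec]
  simp only [smul_eq_mul, Pi.inv_apply]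
  ring

end General

theorem Pinv_eq_diagonal_inv {n : ℕ} (p : Fin n → ℝ) : Pinv p = diagonal p⁻¹ :=
  rfl

theorem Phi_eq_diagonal_single {n : ℕ} (i : Fin n) : Phi i = diagonal (Pi.single i 1) :=
  congrArg diagonal (funext fun j => (Pi.single_apply i 1 j).symm)

/-- The exact expansion of the expected squared norm of the asynchronous map:
`Σᵢ pᵢ ‖(I − εP⁻¹Φ^i + εP⁻¹Φ^i Q)y‖² = ‖y‖² + yᵀ(−2ε(I−Q) + ε²(I−Q)P⁻¹(I−Q))y`. -/
theorem stmt13 (n : ℕ) (hn : 1 ≤ n)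
    (Q : Matrix (Fin n) (Fin n) ℝ) (hQ : Q.IsSymm)
    (p : Fin n → ℝ) (hp : ∀ i, 0 < p i) (hpsum : ∑ i, p i = 1)
    (ε : ℝ) (y : Fin n → ℝ) :
    ∑ i, p i *
        ∑ j, ((1 - ε • (Pinv p * Phi i) + ε • (Pinv p * Phi i * Q)).mulVec y) j ^ 2 =
      (∑ j, y j ^ 2) +
        y ⬝ᵥ (((-(2 * ε)) • (1 - Q)
          + (ε ^ 2) • ((1 - Q) * Pinv p * (1 - Q))).mulVec y) := by
  have hQ' : (1 - Q)ᵀ = 1 - Q := isSymm_one.sub hQ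
  simpa only [Pinv_eq_diagonal_inv, Phi_eq_diagonal_single, hQ', hpsum, one_mul] using
    stmt13_general Q (fun i => (hp i).ne') ε y
end
end

section
/- Let Q be a symmetric n×n real matrix with 0 ⪯ Q ⪯ ρ²I for some 0 < ρ < 1, and let P be a diagonal matrix with diagonal entries p_i ≥ π > 0. Then for any ε > 0 and any y ∈ ℝⁿ: yᵀ(−2ε(I − Q) + ε²(I − Q)P⁻¹(I − Q)) y ≤ ε · max{ε/π − 2, ε(1−ρ²)²/π − 2(1−ρ²)} · ‖y‖², where ‖·‖ is the Euclidean norm. -/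
open Matrix BigOperators

noncomputable section

/-!
Put `a = 1 - Q`, so that `1 - ρ² ≤ a ≤ 1` in the Loewner order. Conjugating `P⁻¹ ≤ π⁻¹` by `a`
bounds the matrix by `-2εa + ε²π⁻¹a²`, a function of `a` alone. The functional calculus then reduces
the claim to the convex scalar function `x ↦ -2εx + ε²π⁻¹x²` on `[1 - ρ², 1]`, which is bounded by
the larger of its endpoint values; these are `ε` times the two entries of the maximum.
-/

open scoped MatrixOrder

section ContinuousFunctionalCalculus

variable {A : Type*} [TopologicalSpace A] [Ring A] [StarRing A] [PartialOrder A]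
  [StarOrderedRing A] [Algebra ℝ A] [ContinuousFunctionalCalculus ℝ A IsSelfAdjoint]
  [NonnegSpectrumClass ℝ A]

lemma cfc_le_algebraMap_max_of_convexOn {a : A} {l u : ℝ} {f : ℝ → ℝ}
    (ha : IsSelfAdjoint a) (hl : algebraMap ℝ A l ≤ a) (hu : a ≤ algebraMap ℝ A u)
    (hf : ConvexOn ℝ (Set.Icc l u) f) (hcont : ContinuousOn f (spectrum ℝ a)) :
    cfc f a ≤ algebraMap ℝ A (max (f l) (f u)) := by
  refine (cfc_le_algebraMap_iff f _ a).mpr fun x hx ↦ ?_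
  have hlx : l ≤ x := (algebraMap_le_iff_le_spectrum ha).mp hl x hx
  have hxu : x ≤ u := (le_algebraMap_iff_spectrum_le ha).mp hu x hx
  have hlu : l ≤ u := hlx.trans hxu
  exact hf.le_max_of_mem_Icc (Set.left_mem_Icc.mpr hlu) (Set.right_mem_Icc.mpr hlu) ⟨hlx, hxu⟩

lemma convexOn_mul_add_mul_sq {c : ℝ} (hc : 0 ≤ c) (b : ℝ) :
    ConvexOn ℝ Set.univ fun x : ℝ ↦ b * x + c * x ^ 2 :=
  ((LinearMap.mulLeft ℝ b).convexOn convex_univ).add (even_two.convexOn_pow.smul hc)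

lemma smul_add_smul_sq_le_max_smul_one {a : A} {l u b c : ℝ} (ha : IsSelfAdjoint a)
    (hl : l • 1 ≤ a) (hu : a ≤ u • 1) (hc : 0 ≤ c) :
    b • a + c • a ^ 2 ≤ max (b * l + c * l ^ 2) (b * u + c * u ^ 2) • (1 : A) := by
  have hcfc : cfc (fun x : ℝ ↦ b * x + c * x ^ 2) a = b • a + c • a ^ 2 := by
    rw [cfc_add a (fun x : ℝ ↦ b * x) (fun x ↦ c * x ^ 2), cfc_const_mul_id b a,
      cfc_const_mul c (· ^ 2) a, cfc_pow_id a 2]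
  rw [← Algebra.algebraMap_eq_smul_one] at hl hu ⊢
  rw [← hcfc]
  exact cfc_le_algebraMap_max_of_convexOn ha hl hu
    ((convexOn_mul_add_mul_sq hc b).subset (Set.subset_univ _) (convex_Icc l u))
    (by fun_prop)

/-- `w` plays the role of `P⁻¹` and `r` that of `ρ²`. -/
theorem stmt14_general [StarModule ℝ A] {q w : A} {r π ε : ℝ} (hq : 0 ≤ q) (hqr : q ≤ r • 1)
    (hπ : 0 < π) (hw : w ≤ π⁻¹ • 1) (hε : 0 ≤ ε) :
    (-(2 * ε)) • (1 - q) + ε ^ 2 • ((1 - q) * w * (1 - q)) ≤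
      (ε * max (ε / π - 2) (ε * (1 - r) ^ 2 / π - 2 * (1 - r))) • 1 := by
  have hsa : IsSelfAdjoint (1 - q) := (IsSelfAdjoint.one A).sub (.of_nonneg hq)
  have hlower : (1 - r) • 1 ≤ 1 - q := by
    rw [sub_smul, one_smul]
    exact sub_le_sub_left hqr 1
  have hupper : 1 - q ≤ (1 : ℝ) • 1 := by
    rw [one_smul]
    exact sub_le_self 1 hq
  have hconj : (1 - q) * w * (1 - q) ≤ π⁻¹ • (1 - q) ^ 2 := by
    simpa only [mul_smul_comm, smul_mul_assoc, mul_one, ← sq] using hsa.conjugate_le_conjugate hw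
  calc (-(2 * ε)) • (1 - q) + ε ^ 2 • ((1 - q) * w * (1 - q))
      ≤ (-(2 * ε)) • (1 - q) + (ε ^ 2 * π⁻¹) • (1 - q) ^ 2 := by
        rw [mul_smul]
        gcongr
    _ ≤ max (-(2 * ε) * (1 - r) + ε ^ 2 * π⁻¹ * (1 - r) ^ 2)
          (-(2 * ε) * 1 + ε ^ 2 * π⁻¹ * 1 ^ 2) • 1 :=
        smul_add_smul_sq_le_max_smul_one hsa hlower hupper (by positivity)
    _ = (ε * max (ε / π - 2) (ε * (1 - r) ^ 2 / π - 2 * (1 - r))) • 1 := by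
        rw [max_comm, mul_max_of_nonneg _ _ hε]
        ring_nf

end ContinuousFunctionalCalculus

lemma dotProduct_mulVec_le_of_le_smul_one_s14 {ι : Type*} [Fintype ι] [DecidableEq ι]
    {M : Matrix ι ι ℝ} {c : ℝ} (hM : M ≤ c • 1) (y : ι → ℝ) :
    y ⬝ᵥ (M *ᵥ y) ≤ c * ∑ i, y i ^ 2 := by
  have hnonneg : 0 ≤ y ⬝ᵥ ((c • 1 - M) *ᵥ y) := (Matrix.le_iff.mp hM).dotProduct_mulVec_nonneg y
  have hnorm : y ⬝ᵥ y = ∑ i, y i ^ 2 := by simp only [dotProduct, sq]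
  simpa only [sub_mulVec, smul_mulVec, one_mulVec, dotProduct_sub, dotProduct_smul, smul_eq_mul,
    hnorm, sub_nonneg] using hnonneg

lemma Pinv_le_inv_smul_one {n : ℕ} {p : Fin n → ℝ} {π : ℝ} (hπ : 0 < π) (hp : ∀ i, π ≤ p i) :
    Pinv p ≤ π⁻¹ • 1 := by
  rw [Matrix.le_iff, Pinv, smul_one_eq_diagonal, diagonal_sub]
  exact .diagonal fun i ↦ sub_nonneg.mpr (inv_anti₀ hπ (hp i))

/-- For `0 ⪯ Q ⪯ ρ²I` and `P` diagonal with entries `≥ π`: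
`yᵀ(−2ε(I−Q) + ε²(I−Q)P⁻¹(I−Q))y ≤ ε·max{ε/π − 2, ε(1−ρ²)²/π − 2(1−ρ²)}·‖y‖²`. -/
theorem stmt14 (n : ℕ) (hn : 1 ≤ n)
    (Q : Matrix (Fin n) (Fin n) ℝ)
    (ρ : ℝ) (hρ0 : 0 < ρ) (hρ1 : ρ < 1)
    (hQpsd : Q.PosSemidef)
    (hQub : ((ρ ^ 2) • (1 : Matrix (Fin n) (Fin n) ℝ) - Q).PosSemidef)
    (p : Fin n → ℝ) (pmin : ℝ) (hpmin : 0 < pmin) (hp : ∀ i, pmin ≤ p i)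
    (ε : ℝ) (hε : 0 < ε) (y : Fin n → ℝ) :
    y ⬝ᵥ (((-(2 * ε)) • (1 - Q)
        + (ε ^ 2) • ((1 - Q) * Pinv p * (1 - Q))).mulVec y) ≤
      ε * max (ε / pmin - 2) (ε * (1 - ρ ^ 2) ^ 2 / pmin - 2 * (1 - ρ ^ 2)) *
        ∑ i, y i ^ 2 :=
  dotProduct_mulVec_le_of_le_smul_one_s14
    (stmt14_general hQpsd.nonneg hQub hpmin (Pinv_le_inv_smul_one hpmin hp) hε.le) y
end
end

section
/- Let Q be a symmetric n×n real matrix with 0 ⪯ Q ⪯ ρ²I for some 0 < ρ < 1, and let P be a diagonal matrix with positive diagonal entries p_1,…,p_n summing to 1 and satisfying p_i ≥ π > 0. If 0 < ε < 2π, then for every y ∈ ℝⁿ: Σᵢ pᵢ ‖(I − εP⁻¹Φ^i + εP⁻¹Φ^i Q) y‖ ≤ C₁ ‖y‖, where C₁ = (1 + ε·max{ε/π − 2, ε(1−ρ²)²/π − 2(1−ρ²)})^{1/2}, and moreover C₁ < 1. -/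
open Matrix BigOperators

noncomputable section

/-!
With `L = 1 - Q`, the `i`-th map moves `y` by `-(ε / p i) (L y) i` along the `i`-th basis vector,
as in randomized coordinate descent. The weight `p i` cancels the `1 / p i` of the step size in the
cross term, so the mean square norm after one step is at most
`‖y‖² + ε (ε / π ‖L y‖² - 2 ⟪y, L y⟫)`. If `L` has spectrum in `[α, β]`, then the convexity of
`t ↦ ε / π t² - 2 t` bounds the bracket by the larger of its values at `α` and `β`, times `‖y‖²`.
Jensen's inequality passes from the mean square to the mean.
-/

section QuadraticForm

open scoped ComplexOrder MatrixOrder in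
theorem posSemidef_mul_of_commute {𝕜 ι : Type*} [RCLike 𝕜] [Fintype ι]
    {A B : Matrix ι ι 𝕜} (hA : A.PosSemidef) (hB : B.PosSemidef) (h : Commute A B) :
    (A * B).PosSemidef := by
  classical
  exact nonneg_iff_posSemidef.mp (h.mul_nonneg hA.nonneg hB.nonneg)

variable {ι : Type*} [Fintype ι] [DecidableEq ι] {L : Matrix ι ι ℝ} {α β : ℝ}

theorem dotProduct_mulVec_le_of_posSemidef_sub
    (hβ : (β • (1 : Matrix ι ι ℝ) - L).PosSemidef) (y : ι → ℝ) :
    y ⬝ᵥ L *ᵥ y ≤ β * (y ⬝ᵥ y) := by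
  have h : 0 ≤ y ⬝ᵥ (β • 1 - L) *ᵥ y := hβ.dotProduct_mulVec_nonneg y
  simpa only [sub_mulVec, smul_mulVec, one_mulVec, dotProduct_sub, dotProduct_smul, smul_eq_mul,
    sub_nonneg] using h

theorem le_dotProduct_mulVec_of_posSemidef_sub
    (hα : (L - α • (1 : Matrix ι ι ℝ)).PosSemidef) (y : ι → ℝ) :
    α * (y ⬝ᵥ y) ≤ y ⬝ᵥ L *ᵥ y := by
  have h : 0 ≤ y ⬝ᵥ (L - α • 1) *ᵥ y := hα.dotProduct_mulVec_nonneg y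
  simpa only [sub_mulVec, smul_mulVec, one_mulVec, dotProduct_sub, dotProduct_smul, smul_eq_mul,
    sub_nonneg] using h

theorem mulVec_dotProduct_mulVec_le (hα : (L - α • (1 : Matrix ι ι ℝ)).PosSemidef)
    (hβ : (β • (1 : Matrix ι ι ℝ) - L).PosSemidef) (y : ι → ℝ) :
    L *ᵥ y ⬝ᵥ L *ᵥ y ≤ (α + β) * (y ⬝ᵥ L *ᵥ y) - α * β * (y ⬝ᵥ y) := by
  have hcomm : Commute (L - α • 1) (β • 1 - L) := by
    simp only [commute_iff_eq, sub_mul, mul_sub, smul_mul_assoc, mul_smul_comm, one_mul, mul_one]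
    module
  have hsymm : L.IsSymm := by
    simpa [IsSymm, IsHermitian] using hα.isHermitian.add (isHermitian_one.smul (.all α))
  have hsq : y ⬝ᵥ L *ᵥ (L *ᵥ y) = L *ᵥ y ⬝ᵥ L *ᵥ y := by
    rw [dotProduct_mulVec, ← mulVec_transpose, hsymm.eq]
  have h : 0 ≤ y ⬝ᵥ ((L - α • 1) * (β • 1 - L)) *ᵥ y :=
    (posSemidef_mul_of_commute hα hβ hcomm).dotProduct_mulVec_nonneg y
  simp only [← mulVec_mulVec, sub_mulVec, mulVec_sub, smul_mulVec, mulVec_smul, one_mulVec,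
    dotProduct_sub, dotProduct_smul, smul_eq_mul, hsq] at h
  linarith

theorem mul_mulVec_dotProduct_sub_le (hα : (L - α • (1 : Matrix ι ι ℝ)).PosSemidef)
    (hβ : (β • (1 : Matrix ι ι ℝ) - L).PosSemidef) {k : ℝ} (hk : 0 ≤ k) (y : ι → ℝ) :
    k * (L *ᵥ y ⬝ᵥ L *ᵥ y) - 2 * (y ⬝ᵥ L *ᵥ y) ≤
      max (k * α ^ 2 - 2 * α) (k * β ^ 2 - 2 * β) * (y ⬝ᵥ y) := by
  have hy : 0 ≤ y ⬝ᵥ y := dotProduct_self_star_nonneg y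
  have hlow := le_dotProduct_mulVec_of_posSemidef_sub hα y
  have hupp := dotProduct_mulVec_le_of_posSemidef_sub hβ y
  have hquad := mul_le_mul_of_nonneg_left (mulVec_dotProduct_mulVec_le hα hβ y) hk
  have hmaxα := mul_le_mul_of_nonneg_right
    (le_max_left (k * α ^ 2 - 2 * α) (k * β ^ 2 - 2 * β)) hy
  have hmaxβ := mul_le_mul_of_nonneg_right
    (le_max_right (k * α ^ 2 - 2 * α) (k * β ^ 2 - 2 * β)) hy
  -- The resulting bound is affine in `y ⬝ᵥ L *ᵥ y`, with slope `k * (α + β) - 2`.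
  rcases le_total 0 (k * (α + β) - 2) with hslope | hslope
  · linarith [mul_le_mul_of_nonneg_left hupp hslope]
  · linarith [mul_le_mul_of_nonpos_left hlow hslope]

end QuadraticForm

section CoordinateStep

variable {ι : Type*} [Fintype ι] [DecidableEq ι]

theorem sub_single_dotProduct_self {R : Type*} [CommRing R] (y : ι → R) (i : ι) (c : R) :
    (y - Pi.single i c) ⬝ᵥ (y - Pi.single i c) = y ⬝ᵥ y - 2 * c * y i + c ^ 2 := by
  simp only [sub_dotProduct, dotProduct_sub, dotProduct_single, single_dotProduct,
    Pi.sub_apply, Pi.single_eq_same]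
  ring

theorem sum_mul_sub_single_dotProduct_self_le {p : ι → ℝ} {pmin : ℝ} (hpmin : 0 < pmin)
    (hp : ∀ i, pmin ≤ p i) (hpsum : ∑ i, p i = 1) (ε : ℝ) (y g : ι → ℝ) :
    ∑ i, p i * ((y - Pi.single i (ε / p i * g i)) ⬝ᵥ (y - Pi.single i (ε / p i * g i))) ≤
      y ⬝ᵥ y + ε * (ε / pmin * (g ⬝ᵥ g) - 2 * (y ⬝ᵥ g)) := by
  have hterm (i : ι) :
      p i * ((y - Pi.single i (ε / p i * g i)) ⬝ᵥ (y - Pi.single i (ε / p i * g i))) ≤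
        p i * (y ⬝ᵥ y) + (ε ^ 2 / pmin * (g i * g i) - 2 * ε * (y i * g i)) := by
    have hpi : 0 < p i := hpmin.trans_le (hp i)
    calc p i * ((y - Pi.single i (ε / p i * g i)) ⬝ᵥ (y - Pi.single i (ε / p i * g i)))
        = p i * (y ⬝ᵥ y) + (ε ^ 2 / p i * (g i * g i) - 2 * ε * (y i * g i)) := by
          rw [sub_single_dotProduct_self]
          field_simp
          ring
      _ ≤ p i * (y ⬝ᵥ y) + (ε ^ 2 / pmin * (g i * g i) - 2 * ε * (y i * g i)) := by
          gcongr
          · exact mul_self_nonneg (g i)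
          · exact hp i
  calc _ ≤ ∑ i, (p i * (y ⬝ᵥ y) + (ε ^ 2 / pmin * (g i * g i) - 2 * ε * (y i * g i))) :=
        Finset.sum_le_sum fun i _ => hterm i
    _ = y ⬝ᵥ y + (ε ^ 2 / pmin * (g ⬝ᵥ g) - 2 * ε * (y ⬝ᵥ g)) := by
        rw [Finset.sum_add_distrib, Finset.sum_sub_distrib, ← Finset.sum_mul, ← Finset.mul_sum,
          ← Finset.mul_sum, hpsum, one_mul, dotProduct, dotProduct, dotProduct]
    _ = y ⬝ᵥ y + ε * (ε / pmin * (g ⬝ᵥ g) - 2 * (y ⬝ᵥ g)) := by ring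

end CoordinateStep

theorem sum_mul_sqrt_le_sqrt_sum_mul {ι : Type*} {s : Finset ι} {w x : ι → ℝ}
    (hw : ∀ i ∈ s, 0 ≤ w i) (hsum : ∑ i ∈ s, w i = 1) (hx : ∀ i ∈ s, 0 ≤ x i) :
    ∑ i ∈ s, w i * √(x i) ≤ √(∑ i ∈ s, w i * x i) :=
  Real.strictConcaveOn_sqrt.concaveOn.le_map_sum hw hsum hx

section AsynchronousMap

variable {n : ℕ}

theorem enorm_eq_sqrt_dotProduct (v : Fin n → ℝ) : _root_.enorm v = √(v ⬝ᵥ v) := by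
  simp only [_root_.enorm, dotProduct, sq]

theorem async_mulVec_eq_sub_single (Q : Matrix (Fin n) (Fin n) ℝ) (p : Fin n → ℝ) (ε : ℝ)
    (i : Fin n) (y : Fin n → ℝ) :
    (1 - ε • (Pinv p * Phi i) + ε • (Pinv p * Phi i * Q)) *ᵥ y =
      y - Pi.single i (ε / p i * ((1 - Q) *ᵥ y) i) := by
  ext j
  simp only [Pinv, Phi, diagonal_mul_diagonal, add_mulVec, sub_mulVec, smul_mulVec, one_mulVec,
    ← mulVec_mulVec, mulVec_diagonal, Pi.add_apply, Pi.sub_apply, Pi.smul_apply, smul_eq_mul]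
  rcases eq_or_ne j i with rfl | hij
  · rw [if_pos rfl, Pi.single_eq_same]
    ring
  · rw [if_neg hij, Pi.single_eq_of_ne hij]
    ring

theorem sum_mul_enorm_async_mulVec_le {Q : Matrix (Fin n) (Fin n) ℝ} {a b : ℝ}
    (ha : (Q - a • (1 : Matrix (Fin n) (Fin n) ℝ)).PosSemidef)
    (hb : (b • (1 : Matrix (Fin n) (Fin n) ℝ) - Q).PosSemidef)
    {p : Fin n → ℝ} {pmin : ℝ} (hpmin : 0 < pmin) (hp : ∀ i, pmin ≤ p i) (hpsum : ∑ i, p i = 1)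
    {ε : ℝ} (hε : 0 ≤ ε) (y : Fin n → ℝ) :
    ∑ i, p i * _root_.enorm ((1 - ε • (Pinv p * Phi i) + ε • (Pinv p * Phi i * Q)) *ᵥ y) ≤
      √(1 + ε * max (ε / pmin * (1 - a) ^ 2 - 2 * (1 - a))
        (ε / pmin * (1 - b) ^ 2 - 2 * (1 - b))) * _root_.enorm y := by
  have hL : (1 - Q - (1 - b) • (1 : Matrix (Fin n) (Fin n) ℝ)).PosSemidef := by
    convert hb using 1; module
  have hU : ((1 - a) • (1 : Matrix (Fin n) (Fin n) ℝ) - (1 - Q)).PosSemidef := by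
    convert ha using 1; module
  have hquad := mul_mulVec_dotProduct_sub_le hL hU (div_nonneg hε hpmin.le) y
  rw [max_comm] at hquad
  have hy : 0 ≤ y ⬝ᵥ y := dotProduct_self_star_nonneg y
  simp only [async_mulVec_eq_sub_single, enorm_eq_sqrt_dotProduct]
  rw [← Real.sqrt_mul' _ hy]
  refine (sum_mul_sqrt_le_sqrt_sum_mul (fun i _ => hpmin.le.trans (hp i)) hpsum
    fun i _ => dotProduct_self_star_nonneg _).trans (Real.sqrt_le_sqrt ?_)
  calc _ ≤ _ := sum_mul_sub_single_dotProduct_self_le hpmin hp hpsum ε y ((1 - Q) *ᵥ y)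
    _ ≤ y ⬝ᵥ y + ε * (max (ε / pmin * (1 - a) ^ 2 - 2 * (1 - a))
          (ε / pmin * (1 - b) ^ 2 - 2 * (1 - b)) * (y ⬝ᵥ y)) := by gcongr
    _ = _ := by ring

end AsynchronousMap

theorem mul_sq_sub_two_mul_neg {k t : ℝ} (ht : 0 < t) (hkt : k * t < 2) :
    k * t ^ 2 - 2 * t < 0 := by
  linarith [mul_lt_mul_of_pos_right hkt ht, sq t, mul_assoc k t t]

theorem sqrt_one_add_mul_max_lt_one {ε k α β : ℝ} (hε : 0 < ε) (hk : 0 ≤ k) (hα : 0 < α)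
    (hαβ : α ≤ β) (hkβ : k * β < 2) :
    √(1 + ε * max (k * β ^ 2 - 2 * β) (k * α ^ 2 - 2 * α)) < 1 := by
  have hkα : k * α < 2 := (mul_le_mul_of_nonneg_left hαβ hk).trans_lt hkβ
  have hmax : max (k * β ^ 2 - 2 * β) (k * α ^ 2 - 2 * α) < 0 :=
    max_lt (mul_sq_sub_two_mul_neg (hα.trans_le hαβ) hkβ) (mul_sq_sub_two_mul_neg hα hkα)
  rw [Real.sqrt_lt' one_pos]
  linarith [mul_neg_of_pos_of_neg hε hmax]

theorem stmt15_general {n : ℕ} {Q : Matrix (Fin n) (Fin n) ℝ} {a b : ℝ} (hab : a ≤ b) (hb1 : b < 1)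
    (ha : (Q - a • (1 : Matrix (Fin n) (Fin n) ℝ)).PosSemidef)
    (hb : (b • (1 : Matrix (Fin n) (Fin n) ℝ) - Q).PosSemidef)
    {p : Fin n → ℝ} {pmin : ℝ} (hp : ∀ i, pmin ≤ p i) (hpsum : ∑ i, p i = 1)
    {ε : ℝ} (hε : 0 < ε) (hεlt : ε * (1 - a) < 2 * pmin)
    {C : ℝ}
    (hC : C = √(1 + ε * max (ε / pmin * (1 - a) ^ 2 - 2 * (1 - a))
      (ε / pmin * (1 - b) ^ 2 - 2 * (1 - b)))) :
    C < 1 ∧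
    ∀ y : Fin n → ℝ,
      ∑ i, p i * _root_.enorm ((1 - ε • (Pinv p * Phi i) + ε • (Pinv p * Phi i * Q)) *ᵥ y) ≤
        C * _root_.enorm y := by
  subst hC
  have ha1 : 0 < 1 - a := sub_pos.mpr (hab.trans_lt hb1)
  have hpmin : 0 < pmin := pos_of_mul_pos_right ((mul_pos hε ha1).trans hεlt) zero_le_two
  have hstep : ε / pmin * (1 - a) < 2 := by rwa [div_mul_eq_mul_div, div_lt_iff₀ hpmin]
  exact ⟨sqrt_one_add_mul_max_lt_one hε (by positivity) (sub_pos.mpr hb1) (by gcongr) hstep,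
    sum_mul_enorm_async_mulVec_le ha hb hpmin hp hpsum hε.le⟩

/-- Expected contraction of the asynchronous map: for `0 < ε < 2π`,
`Σᵢ pᵢ ‖(I − εP⁻¹Φ^i + εP⁻¹Φ^i Q)y‖ ≤ C₁‖y‖` with
`C₁ = (1 + ε·max{ε/π − 2, ε(1−ρ²)²/π − 2(1−ρ²)})^{1/2} < 1`. -/
theorem stmt15 (n : ℕ) (hn : 1 ≤ n)
    (Q : Matrix (Fin n) (Fin n) ℝ)
    (ρ : ℝ) (hρ0 : 0 < ρ) (hρ1 : ρ < 1)
    (hQpsd : Q.PosSemidef)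
    (hQub : ((ρ ^ 2) • (1 : Matrix (Fin n) (Fin n) ℝ) - Q).PosSemidef)
    (p : Fin n → ℝ) (pmin : ℝ) (hpmin : 0 < pmin) (hp : ∀ i, pmin ≤ p i)
    (hppos : ∀ i, 0 < p i) (hpsum : ∑ i, p i = 1)
    (ε : ℝ) (hε : 0 < ε) (hεlt : ε < 2 * pmin)
    (C1 : ℝ)
    (hC1 : C1 = Real.sqrt
      (1 + ε * max (ε / pmin - 2) (ε * (1 - ρ ^ 2) ^ 2 / pmin - 2 * (1 - ρ ^ 2)))) :
    C1 < 1 ∧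
    ∀ y : Fin n → ℝ,
      ∑ i, p i * _root_.enorm ((1 - ε • (Pinv p * Phi i) + ε • (Pinv p * Phi i * Q)).mulVec y) ≤
        C1 * _root_.enorm y := by
  exact stmt15_general (a := 0) (b := ρ ^ 2) (sq_nonneg ρ) (pow_lt_one₀ hρ0.le hρ1 two_ne_zero)
    (by simpa) hQub hp hpsum hε (by simpa) (by simpa [div_mul_eq_mul_div] using hC1)
end
end
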